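/- arXiv:2303.10418 — 2 statements merged into one kernel-verified Lean document; each statement's English description precedes it below -/
import Mathlib

section
/- Let p ≥ 1 and n ≥ 1 be integers, and let π be a noncrossing partition of {0, 1, …, p−1}. Say that a tuple i : {0,…,p−1} → {0,…,n−1} is π-coupled if for every block V of π and every l ∈ V one has i_l = i_{next_V(l)+1}, where next_V(l) is the smallest element of V strictly greater than l if such exists and is min V otherwise, and where the index addition +1 is taken modulo p. Then the number of π-coupled tuples equals n^{e(π)+1}, where e(π) is the number of blocks of π of even cardinality. -/
/-- The successor of `l` inside the block `V`: the smallest element of `V` strictly greater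
than `l` if it exists, and otherwise the minimum of `V`. -/
def blockNext {p : ℕ} (V : Finset (Fin p)) (hV : V.Nonempty) (l : Fin p) : Fin p :=
  if h : (V.filter fun m => l < m).Nonempty then (V.filter fun m => l < m).min' h
  else V.min' hV

/-!
Cut the cycle open: a tuple `i` becomes a labelling `J` of the points `0, …, p` with `J 0 = J p`,
and `l` becomes the edge from `l` to `l + 1`, with label pair `(J l, J (l + 1))`. Coupling says
that `J m = J (l + 1)` whenever `m` immediately precedes `l` in a block, and that
`J M = J (a + 1)` for the minimum `a` and the maximum `M` of a block.

Noncrossingness makes each gap between consecutive elements of a block a union of blocks, and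
by induction on length `J` takes equal values at the two ends of every interval which is a union
of blocks. So passing to the next element of a block swaps the label pair. Along a block of even
cardinality the last condition is then automatic, and along a block of odd cardinality it becomes
`J a = J (a + 1)`. After this replacement `J 0 = J p` is automatic, and every condition expresses
the label of a point by that of an earlier point, at most one condition for each point. The
unconstrained points are `0` and `a + 1` for `a` the minimum of a block of even cardinality.
-/

section Order

variable {ι β : Type*}

section LinearOrder

variable [LinearOrder ι] [Fintype ι] {f : β → β} {z : ι → β}

theorem eq_iterate_card_lt_of_covBy (hz : ∀ m l, m ⋖ l → z l = f (z m)) {a : ι} (ha : IsBot a)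
    (l : ι) : z l = f^[(Finset.univ.filter (· < l)).card] (z a) := by
  induction l using WellFoundedLT.induction with
  | ind l ih =>
    by_cases hl : IsMin l
    · have hempty : Finset.univ.filter (· < l) = ∅ := by simpa using! fun x => hl.not_lt
      rw [hempty, hl.eq_of_le (ha l)]
      rfl
    · obtain ⟨m, hml⟩ := exists_covBy_of_wellFoundedGT hl
      have hinsert : Finset.univ.filter (· < l) = insert m (Finset.univ.filter (· < m)) := by
        ext x
        simp [hml.lt_iff_le_left, le_iff_eq_or_lt]
      rw [hz m l hml, ih m hml.lt, hinsert, Finset.card_insert_of_notMem (by simp),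
        Function.iterate_succ_apply']

theorem apply_eq_iterate_card_of_covBy (hz : ∀ m l, m ⋖ l → z l = f (z m)) {a M : ι}
    (ha : IsBot a) (hM : IsTop M) : f (z M) = f^[Fintype.card ι] (z a) := by
  have herase : Finset.univ.filter (· < M) = Finset.univ.erase M := by
    ext x
    simp [(hM x).lt_iff_ne]
  rw [eq_iterate_card_lt_of_covBy hz ha M, herase, ← Finset.card_univ,
    ← Finset.card_erase_add_one (Finset.mem_univ M), Function.iterate_succ_apply']

end LinearOrder

theorem bijective_restrict_of_parent_lt [LT ι] [WellFoundedLT ι] {F : Set ι} {parent : ι → ι}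
    (hparent : ∀ x ∉ F, parent x < x) :
    Function.Bijective fun (J : {J : ι → β // ∀ x ∉ F, J x = J (parent x)}) (x : F) => J.1 x := by
  classical
  constructor
  · rintro ⟨J, hJ⟩ ⟨K, hK⟩ h
    refine Subtype.ext (funext fun x => ?_)
    induction x using WellFoundedLT.induction with
    | ind x ih =>
      by_cases hx : x ∈ F
      · exact congrFun h ⟨x, hx⟩
      · exact (hJ x hx).trans ((ih _ (hparent x hx)).trans (hK x hx).symm)
  · intro y
    let extend : ι → β := wellFounded_lt.fix fun x J =>
      if hx : x ∈ F then y ⟨x, hx⟩ else J (parent x) (hparent x hx)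
    have hextend (x : ι) :
        extend x = if hx : x ∈ F then y ⟨x, hx⟩ else extend (parent x) :=
      wellFounded_lt.fix_eq _ x
    exact ⟨⟨extend, fun x hx => (hextend x).trans (dif_neg hx)⟩,
      funext fun x => (hextend x).trans (dif_pos x.2)⟩

end Order

section Block

variable {p : ℕ} {α : Type*} {V : Finset (Fin p)} {J : Fin (p + 1) → α}

/-- The coupling conditions inside the block `V` other than the one at its maximum, for a
labelling `J` of the points `0, …, p`. -/
def IsChained (V : Finset (Fin p)) (J : Fin (p + 1) → α) : Prop :=
  ∀ m l : V, m ⋖ l → J m.1.castSucc = J l.1.succ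

/-- The coupling condition at the maximum `M` of the block `V`, which leads back to its
minimum `a`. -/
def ChainCloses (V : Finset (Fin p)) (J : Fin (p + 1) → α) : Prop :=
  ∀ a M : V, IsBot a → IsTop M → J M.1.castSucc = J a.1.succ

/-- The condition replacing `ChainCloses`, in which `J` is only compared with an earlier value:
the two labels at the minimum of `V` agree if `V` has odd cardinality. -/
def IsFlatIfOdd (V : Finset (Fin p)) (J : Fin (p + 1) → α) : Prop :=
  Odd V.card → ∀ a : V, IsBot a → J a.1.castSucc = J a.1.succ

/-- `J` takes the same value at the two ends of each gap between consecutive elements of `V`. -/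
def GapsBalanced (V : Finset (Fin p)) (J : Fin (p + 1) → α) : Prop :=
  ∀ m l : V, m ⋖ l → J m.1.succ = J l.1.castSucc

theorem blockNext_eq_of_covBy {m l : V} (hml : m ⋖ l) (hV : V.Nonempty) :
    blockNext V hV m = l := by
  have hl : l.1 ∈ V.filter fun x => m.1 < x := by simpa using! hml.lt
  rw [blockNext, dif_pos ⟨_, hl⟩]
  refine le_antisymm (Finset.min'_le _ _ hl) (Finset.le_min' _ _ _ fun x hx => ?_)
  obtain ⟨hxV, hmx⟩ := Finset.mem_filter.mp hx
  exact hml.ge_of_gt (show m < ⟨x, hxV⟩ from hmx)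

theorem blockNext_eq_of_isTop {a M : V} (ha : IsBot a) (hM : IsTop M) (hV : V.Nonempty) :
    blockNext V hV M = a := by
  have hempty : ¬ (V.filter fun x => M.1 < x).Nonempty := by
    rintro ⟨x, hx⟩
    obtain ⟨hxV, hMx⟩ := Finset.mem_filter.mp hx
    exact (hM ⟨x, hxV⟩).not_gt hMx
  rw [blockNext, dif_neg hempty]
  exact le_antisymm (Finset.min'_le _ _ a.2) (Finset.le_min' _ _ _ fun x hx => ha ⟨x, hx⟩)

theorem forall_eq_blockNext_iff (hV : V.Nonempty) :
    (∀ l ∈ V, J l.castSucc = J (blockNext V hV l).succ) ↔ IsChained V J ∧ ChainCloses V J := by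
  refine ⟨fun h => ⟨fun m l hml => ?_, fun a M ha hM => ?_⟩, fun ⟨hchain, hclose⟩ l hl => ?_⟩
  · rw [h m m.2, blockNext_eq_of_covBy hml]
  · rw [h M M.2, blockNext_eq_of_isTop ha hM]
  · lift l to V using hl
    by_cases hmax : IsMax l
    · have hbot : IsBot (⟨V.min' hV, V.min'_mem hV⟩ : V) := fun x => V.min'_le x x.2
      rw [blockNext_eq_of_isTop hbot hmax.isTop]
      exact hclose _ l hbot hmax.isTop
    · obtain ⟨m, hlm⟩ := exists_covBy_of_wellFoundedLT hmax
      rw [blockNext_eq_of_covBy hlm]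
      exact hchain l m hlm

theorem IsChained.swap_labels_top (hchain : IsChained V J) (hgap : GapsBalanced V J) {a M : V}
    (ha : IsBot a) (hM : IsTop M) :
    (J M.1.succ, J M.1.castSucc) = Prod.swap^[V.card] (J a.1.castSucc, J a.1.succ) := by
  have h := apply_eq_iterate_card_of_covBy (f := Prod.swap)
    (z := fun l : V => (J l.1.castSucc, J l.1.succ))
    (fun m l hml => Prod.ext (hgap m l hml).symm (hchain m l hml).symm) ha hM
  rwa [Fintype.card_coe] at h

theorem IsChained.labels_top_of_even (hchain : IsChained V J) (hgap : GapsBalanced V J)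
    (hV : Even V.card) {a M : V} (ha : IsBot a) (hM : IsTop M) :
    J M.1.castSucc = J a.1.succ ∧ J M.1.succ = J a.1.castSucc := by
  have hswap := hchain.swap_labels_top hgap ha hM
  rw [Function.Involutive.iterate_even Prod.swap_swap hV, id, Prod.mk.injEq] at hswap
  exact hswap.symm

theorem IsChained.labels_top_of_odd (hchain : IsChained V J) (hgap : GapsBalanced V J)
    (hV : Odd V.card) {a M : V} (ha : IsBot a) (hM : IsTop M) :
    J M.1.castSucc = J a.1.castSucc ∧ J M.1.succ = J a.1.succ := by
  have hswap := hchain.swap_labels_top hgap ha hM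
  rw [Function.Involutive.iterate_odd Prod.swap_swap hV, Prod.swap_prod_mk,
    Prod.mk.injEq] at hswap
  exact hswap.symm

theorem IsChained.chainCloses_iff_isFlatIfOdd (hchain : IsChained V J)
    (hgap : GapsBalanced V J) : ChainCloses V J ↔ IsFlatIfOdd V J := by
  constructor
  · intro hclose hodd a ha
    have : Nonempty V := ⟨a⟩
    obtain ⟨M, hM⟩ : ∃ M : V, IsTop M := Finite.exists_max id
    exact (hchain.labels_top_of_odd hgap hodd ha hM).1.symm.trans (hclose a M ha hM)
  · intro hflat a M ha hM
    rcases V.card.even_or_odd with heven | hodd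
    · exact (hchain.labels_top_of_even hgap heven ha hM).1
    · exact (hchain.labels_top_of_odd hgap hodd ha hM).1.trans (hflat hodd a ha)

theorem IsChained.castSucc_bot_eq_succ_top (hchain : IsChained V J) (hgap : GapsBalanced V J)
    (hflat : IsFlatIfOdd V J) {a M : V} (ha : IsBot a) (hM : IsTop M) :
    J a.1.castSucc = J M.1.succ := by
  rcases V.card.even_or_odd with heven | hodd
  · exact (hchain.labels_top_of_even hgap heven ha hM).2.symm
  · exact (hflat hodd a ha).trans (hchain.labels_top_of_odd hgap hodd ha hM).2.symm

end Block

section Noncrossing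

variable {p : ℕ} {α : Type*} {π : Finpartition (Finset.univ : Finset (Fin p))}
  {J : Fin (p + 1) → α}

/-- The noncrossing partitions: no two distinct blocks interleave. -/
def IsNoncrossing (π : Finpartition (Finset.univ : Finset (Fin p))) : Prop :=
  ¬ ∃ a b c d : Fin p, a < b ∧ b < c ∧ c < d ∧
    ∃ B ∈ π.parts, ∃ B' ∈ π.parts, B ≠ B' ∧ a ∈ B ∧ c ∈ B ∧ b ∈ B' ∧ d ∈ B'

/-- The set of all `x` with `a ≤ x < b` is a union of blocks of `π`. The ends are points of
`Fin (p + 1)` so that `b = p` is allowed. -/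
def IsBlockUnion (π : Finpartition (Finset.univ : Finset (Fin p))) (a b : Fin (p + 1)) : Prop :=
  ∀ V ∈ π.parts, ∀ x ∈ V, ∀ y ∈ V,
    a ≤ x.castSucc → x.castSucc < b → a ≤ y.castSucc ∧ y.castSucc < b

theorem isBlockUnion_zero_last : IsBlockUnion π 0 (Fin.last p) :=
  fun _ _ _ _ y _ _ _ => ⟨Fin.zero_le _, y.castSucc_lt_last⟩

theorem IsNoncrossing.isBlockUnion_gap (hnc : IsNoncrossing π) {V : Finset (Fin p)}
    (hV : V ∈ π.parts) {m l : V} (hml : m ⋖ l) : IsBlockUnion π m.1.succ l.1.castSucc := by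
  intro W hW x hx y hy hmx hxl
  rw [Fin.succ_le_castSucc_iff] at hmx
  rw [Fin.castSucc_lt_castSucc_iff] at hxl
  have hne : V ≠ W := fun h => hml.2 (c := ⟨x, h ▸ hx⟩) hmx hxl
  have hdisj (v : V) : v.1 ≠ y := fun h => hne (π.eq_of_mem_parts hV hW v.2 (h ▸ hy))
  rw [Fin.succ_le_castSucc_iff, Fin.castSucc_lt_castSucc_iff]
  constructor
  · by_contra! hym
    exact hnc ⟨y, m, x, l, hym.lt_of_ne' (hdisj m), hmx, hxl, W, hW, V, hV, hne.symm, hy, hx,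
      m.2, l.2⟩
  · by_contra! hly
    exact hnc ⟨m, x, l, y, hmx, hxl, hly.lt_of_ne (hdisj l), V, hV, W, hW, hne, m.2, l.2, hx, hy⟩

theorem IsBlockUnion.drop_block {V : Finset (Fin p)} {a M : V} {b : Fin (p + 1)}
    (hab : IsBlockUnion π a.1.castSucc b) (hnc : IsNoncrossing π) (hV : V ∈ π.parts)
    (hM : IsTop M) : IsBlockUnion π M.1.succ b := by
  intro W hW x hx y hy hMx hxb
  rw [Fin.succ_le_castSucc_iff] at hMx ⊢
  have hne : V ≠ W := fun h => (hM ⟨x, h ▸ hx⟩).not_gt hMx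
  have hdisj (v : V) : v.1 ≠ y := fun h => hne (π.eq_of_mem_parts hV hW v.2 (h ▸ hy))
  have hax : a.1 ≤ x := le_trans (hM a) hMx.le
  obtain ⟨hay, hyb⟩ := hab W hW x hx y hy (Fin.castSucc_le_castSucc_iff.mpr hax) hxb
  refine ⟨?_, hyb⟩
  by_contra! hyM
  exact hnc ⟨a, y, M, x, (Fin.castSucc_le_castSucc_iff.mp hay).lt_of_ne (hdisj a),
    hyM.lt_of_ne' (hdisj M), hMx, V, hV, W, hW, hne, a.2, M.2, hy, hx⟩

/-- The disjunction in `hclose` lets one induction serve both directions of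
`IsNoncrossing.chainCloses_iff_isFlatIfOdd`. -/
theorem IsBlockUnion.apply_eq (hnc : IsNoncrossing π) (hchain : ∀ V ∈ π.parts, IsChained V J)
    (hclose : ∀ V ∈ π.parts, ChainCloses V J ∨ IsFlatIfOdd V J) {a b : Fin (p + 1)}
    (h : IsBlockUnion π a b) (hab : a ≤ b) : J a = J b := by
  induction hd : (b : ℕ) - a using Nat.strong_induction_on generalizing a b with
  | _ d ih =>
    rcases hab.eq_or_lt with rfl | hlt
    · rfl
    obtain ⟨s, rfl⟩ := Fin.exists_castSucc_eq.mpr (Fin.ne_last_of_lt hlt)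
    obtain ⟨V, hV, hs⟩ := π.exists_mem (Finset.mem_univ s)
    lift s to V using hs
    have : Nonempty V := ⟨s⟩
    obtain ⟨M, hM⟩ : ∃ M : V, IsTop M := Finite.exists_max id
    have hinside (x : V) := h V hV s s.2 x x.2 le_rfl hlt
    have hs : IsBot s := fun x => (hinside x).1
    have hgap : GapsBalanced V J := fun m l hml => by
      have hml_succ := Fin.succ_le_castSucc_iff.mpr hml.lt
      have hlen : (l.1.castSucc : ℕ) - m.1.succ < d := by grind
      exact ih _ hlen (hnc.isBlockUnion_gap hV hml) hml_succ rfl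
    have hflat : IsFlatIfOdd V J :=
      (hclose V hV).elim ((hchain V hV).chainCloses_iff_isFlatIfOdd hgap).mp id
    have hsM : s.1 ≤ M.1 := hM s
    have hlen : (b : ℕ) - M.1.succ < d := by grind
    calc J s.1.castSucc = J M.1.succ := (hchain V hV).castSucc_bot_eq_succ_top hgap hflat hs hM
      _ = J b := ih _ hlen (h.drop_block hnc hV hM)
        (Fin.castSucc_lt_iff_succ_le.mp (hinside M).2) rfl

theorem IsNoncrossing.chainCloses_iff_isFlatIfOdd (hnc : IsNoncrossing π)
    (hchain : ∀ V ∈ π.parts, IsChained V J) :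
    (∀ V ∈ π.parts, ChainCloses V J) ↔ ∀ V ∈ π.parts, IsFlatIfOdd V J := by
  have hiff (hclose : ∀ V ∈ π.parts, ChainCloses V J ∨ IsFlatIfOdd V J) (V : Finset (Fin p))
      (hV : V ∈ π.parts) : ChainCloses V J ↔ IsFlatIfOdd V J :=
    (hchain V hV).chainCloses_iff_isFlatIfOdd fun m l hml =>
      (hnc.isBlockUnion_gap hV hml).apply_eq hnc hchain hclose
        (Fin.succ_le_castSucc_iff.mpr hml.lt)
  exact ⟨fun h V hV => (hiff (fun W hW => .inl (h W hW)) V hV).mp (h V hV),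
    fun h V hV => (hiff (fun W hW => .inr (h W hW)) V hV).mpr (h V hV)⟩

theorem IsNoncrossing.apply_zero_eq_apply_last (hnc : IsNoncrossing π)
    (hJ : ∀ V ∈ π.parts, IsChained V J ∧ IsFlatIfOdd V J) : J 0 = J (Fin.last p) :=
  isBlockUnion_zero_last.apply_eq hnc (fun V hV => (hJ V hV).1) (fun V hV => .inr (hJ V hV).2)
    (Fin.zero_le _)

end Noncrossing

section FreePoints

variable {p : ℕ} {α : Type*} (π : Finpartition (Finset.univ : Finset (Fin p)))

/-- The minima of the blocks of even cardinality. -/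
def evenBlockMinima : Finset (Fin p) :=
  Finset.univ.filter fun l => Even (π.part l).card ∧ ∀ x ∈ π.part l, l ≤ x

/-- The points whose label is unconstrained by the labels of earlier points. -/
def freePoints : Finset (Fin (p + 1)) :=
  insert 0 ((evenBlockMinima π).map (Fin.succEmb p))

noncomputable local instance blockPredOrder (V : Finset (Fin p)) : PredOrder V :=
  .ofLinearWellFoundedGT V

/-- The earlier point from which the point `x` copies its label, unless `x` is free. It is read
off the order predecessor, in its block, of the edge ending at `x`; as `Order.pred` fixes a
minimal element, it is the other end of that edge when the edge is the minimum of its block. -/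
noncomputable def parentPoint : Fin (p + 1) → Fin (p + 1) :=
  Fin.cases 0 fun l =>
    (Order.pred (⟨l, π.mem_part (Finset.mem_univ l)⟩ : π.part l)).1.castSucc

variable {π} {V : Finset (Fin p)}

theorem mem_evenBlockMinima_iff (hV : V ∈ π.parts) (l : V) :
    l.1 ∈ evenBlockMinima π ↔ Even V.card ∧ IsBot l := by
  simp [evenBlockMinima, π.part_eq_of_mem hV l.2, IsBot, ← Subtype.coe_le_coe]

theorem card_evenBlockMinima :
    (evenBlockMinima π).card = (π.parts.filter fun B => Even B.card).card := by
  have hpart (l : Fin p) : π.part l ∈ π.parts := π.part_mem.mpr (Finset.mem_univ l)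
  have hmem (l : Fin p) : l ∈ π.part l := π.mem_part (Finset.mem_univ l)
  refine Finset.card_bij (fun l _ => π.part l) (fun l hl => ?_) (fun l hl m hm h => ?_)
    fun V hV => ?_
  · exact Finset.mem_filter.mpr ⟨hpart l, (Finset.mem_filter.mp hl).2.1⟩
  · have hl_min := (Finset.mem_filter.mp hl).2.2
    have hm_min := (Finset.mem_filter.mp hm).2.2
    exact le_antisymm (hl_min m (h ▸ hmem m)) (hm_min l (h ▸ hmem l))
  · obtain ⟨hV, heven⟩ := Finset.mem_filter.mp hV
    have hmin := V.isLeast_min' (π.nonempty_of_mem_parts hV)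
    exact ⟨_, (mem_evenBlockMinima_iff hV ⟨_, hmin.1⟩).mpr ⟨heven, fun x => hmin.2 x.2⟩,
      π.part_eq_of_mem hV hmin.1⟩

theorem card_freePoints :
    (freePoints π).card = (π.parts.filter fun B => Even B.card).card + 1 := by
  rw [freePoints, Finset.card_insert_of_notMem (by simp [Fin.succ_ne_zero]), Finset.card_map,
    card_evenBlockMinima]

theorem succ_mem_freePoints_iff (hV : V ∈ π.parts) (l : V) :
    l.1.succ ∈ freePoints π ↔ Even V.card ∧ IsBot l := by
  simp [freePoints, Fin.succ_ne_zero, mem_evenBlockMinima_iff hV]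

theorem parentPoint_succ (hV : V ∈ π.parts) (l : V) :
    parentPoint π l.1.succ = (Order.pred l).1.castSucc := by
  obtain ⟨l, hl⟩ := l
  obtain rfl := π.part_eq_of_mem hV hl
  rfl

theorem parentPoint_lt {x : Fin (p + 1)} (hx : x ∉ freePoints π) : parentPoint π x < x := by
  cases x using Fin.cases with
  | zero => exact absurd (Finset.mem_insert_self _ _) hx
  | succ l => exact Fin.castSucc_lt_succ_iff.mpr (Order.pred_le (⟨l, _⟩ : π.part l))

theorem forall_eq_parentPoint_iff {J : Fin (p + 1) → α} :
    (∀ x ∉ freePoints π, J x = J (parentPoint π x)) ↔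
      ∀ V ∈ π.parts, IsChained V J ∧ IsFlatIfOdd V J := by
  constructor
  · refine fun h V hV => ⟨fun m l hml => ?_, fun hodd a ha => ?_⟩
    · have hfree : l.1.succ ∉ freePoints π := fun hl =>
        (((succ_mem_freePoints_iff hV l).mp hl).2 m).not_gt hml.lt
      rw [h _ hfree, parentPoint_succ hV, hml.pred_eq]
    · have hfree : a.1.succ ∉ freePoints π := fun hl =>
        Nat.not_even_iff_odd.mpr hodd ((succ_mem_freePoints_iff hV a).mp hl).1
      rw [h _ hfree, parentPoint_succ hV, ha.isMin.pred_eq]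
  · intro h x hx
    cases x using Fin.cases with
    | zero => exact absurd (Finset.mem_insert_self _ _) hx
    | succ l =>
      obtain ⟨V, hV, hl⟩ := π.exists_mem (Finset.mem_univ l)
      lift l to V using hl
      obtain ⟨hchain, hflat⟩ := h V hV
      rw [parentPoint_succ hV]
      by_cases hmin : IsMin l
      · have hodd : Odd V.card := Nat.not_even_iff_odd.mp fun heven =>
          hx ((succ_mem_freePoints_iff hV l).mpr ⟨heven, hmin.isBot⟩)
        rw [hmin.pred_eq, hflat hodd l hmin.isBot]
      · exact (hchain _ l (Order.pred_covBy_of_not_isMin hmin)).symm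

theorem mk_isChained_and_isFlatIfOdd :
    Cardinal.mk {J : Fin (p + 1) → α // ∀ V ∈ π.parts, IsChained V J ∧ IsFlatIfOdd V J} =
      Cardinal.mk α ^ ((π.parts.filter fun B => Even B.card).card + 1) := by
  simp_rw [← forall_eq_parentPoint_iff, ← card_freePoints]
  have hbij := bijective_restrict_of_parent_lt (β := α) (F := (freePoints π : Set (Fin (p + 1))))
    fun _ => parentPoint_lt
  exact (Cardinal.mk_congr (.ofBijective _ hbij)).trans (by simp)

end FreePoints

section Coupled

variable {p : ℕ} [NeZero p] {α : Type*} {π : Finpartition (Finset.univ : Finset (Fin p))}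

/-- The `π`-coupled tuples, with indices modulo `p`. -/
def IsCoupled (π : Finpartition (Finset.univ : Finset (Fin p))) (i : Fin p → α) : Prop :=
  ∀ V ∈ π.parts, ∀ l : Fin p, ∀ hl : l ∈ V, i l = i (blockNext V ⟨l, hl⟩ l + 1)

/-- The labelling of `0, …, p` obtained from a tuple by cutting the cycle open at `0`. -/
def cutOpen (i : Fin p → α) (x : Fin (p + 1)) : α :=
  i (Fin.ofNat p x)

theorem cutOpen_castSucc (i : Fin p → α) (l : Fin p) : cutOpen i l.castSucc = i l := by
  simp [cutOpen]

theorem cutOpen_succ (i : Fin p → α) (l : Fin p) : cutOpen i l.succ = i (l + 1) :=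
  congrArg i (Fin.ext (by simp [Fin.val_add]))

theorem cutOpen_comp_castSucc {J : Fin (p + 1) → α} (hJ : J 0 = J (Fin.last p)) :
    cutOpen (J ∘ Fin.castSucc) = J := by
  funext x
  cases x using Fin.lastCases with
  | last => simp [cutOpen, ← hJ]
  | cast l => exact cutOpen_castSucc _ l

theorem IsNoncrossing.isCoupled_iff (hnc : IsNoncrossing π) {i : Fin p → α} :
    IsCoupled π i ↔ ∀ V ∈ π.parts, IsChained V (cutOpen i) ∧ IsFlatIfOdd V (cutOpen i) := by
  have hblock (V : Finset (Fin p)) (hV : V ∈ π.parts) :=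
    forall_eq_blockNext_iff (J := cutOpen i) (π.nonempty_of_mem_parts hV)
  simp only [cutOpen_castSucc, cutOpen_succ] at hblock
  rw [IsCoupled, forall₂_congr hblock, forall₂_and, forall₂_and]
  exact and_congr_right fun hchain => hnc.chainCloses_iff_isFlatIfOdd hchain

/-- The `π`-coupled tuples correspond, by cutting open, to the solutions of a system of equations
that can be solved from left to right. -/
def IsNoncrossing.coupledEquiv (hnc : IsNoncrossing π) :
    {i : Fin p → α // IsCoupled π i} ≃
      {J : Fin (p + 1) → α // ∀ V ∈ π.parts, IsChained V J ∧ IsFlatIfOdd V J} where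
  toFun i := ⟨cutOpen i.1, hnc.isCoupled_iff.mp i.2⟩
  invFun J := ⟨J.1 ∘ Fin.castSucc, hnc.isCoupled_iff.mpr <|
    (cutOpen_comp_castSucc (hnc.apply_zero_eq_apply_last J.2)).symm ▸ J.2⟩
  left_inv i := Subtype.ext <| funext <| cutOpen_castSucc i.1
  right_inv J := Subtype.ext <| cutOpen_comp_castSucc (hnc.apply_zero_eq_apply_last J.2)

end Coupled

theorem card_coupled_tuples_noncrossing_general {p : ℕ} [NeZero p] {α : Type*}
    {π : Finpartition (Finset.univ : Finset (Fin p))} (hnc : IsNoncrossing π) :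
    Cardinal.mk {i : Fin p → α // IsCoupled π i} =
      Cardinal.mk α ^ ((π.parts.filter fun B => Even B.card).card + 1) :=
  (Cardinal.mk_congr hnc.coupledEquiv).trans mk_isChained_and_isFlatIfOdd

/-- For a noncrossing partition `π` of `{0, …, p-1}`, the number of tuples
`i : Fin p → Fin n` that are `π`-coupled (i.e. `i l = i (next_V l + 1)` for every block `V` of
`π` and every `l ∈ V`, indices mod `p`) equals `n ^ (e(π) + 1)`, where `e(π)` is the number of
blocks of `π` of even cardinality. -/
theorem card_coupled_tuples_noncrossing
    (p n : ℕ) [NeZero p] (hp : 1 ≤ p) (hn : 1 ≤ n)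
    (π : Finpartition (Finset.univ : Finset (Fin p)))
    (hnc : ¬ ∃ a b c d : Fin p, a < b ∧ b < c ∧ c < d ∧
      ∃ B ∈ π.parts, ∃ B' ∈ π.parts, B ≠ B' ∧ a ∈ B ∧ c ∈ B ∧ b ∈ B' ∧ d ∈ B') :
    Nat.card {i : Fin p → Fin n //
        ∀ V ∈ π.parts, ∀ l : Fin p, ∀ hl : l ∈ V, i l = i (blockNext V ⟨l, hl⟩ l + 1)} =
      n ^ ((π.parts.filter fun B => Even B.card).card + 1) := by
  exact (congrArg Cardinal.toNat (card_coupled_tuples_noncrossing_general hnc)).trans (by simp)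
end

section
/- Let A be a unital associative ℂ-algebra and φ : A → ℂ a ℂ-linear functional that is tracial, i.e. φ(ab) = φ(ba) for all a, b ∈ A. Let n ≥ 1 and let e_{ij} ∈ A for 0 ≤ i, j ≤ n−1 satisfy the matrix-unit relations e_{ij}·e_{kl} = δ_{jk}·e_{il} for all i,j,k,l and Σ_{i=0}^{n−1} e_{ii} = 1_A. For x ∈ A, define the matrix x̃ ∈ M_n(A) (an n × n matrix with entries in A) by x̃_{ij} = e_{0i}·x·e_{j0}. Then for every integer p ≥ 1, Σ_{i=0}^{n−1} φ((x̃^p)_{ii}) = φ(x^p). -/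
/-!
In a product of matrices `(u i * x * v j)` and `(u i * y * v j)`, the inner sum is `∑ k, v k * u k`.
If this equals `1`, then `x ↦ (u i * x * v j)` is multiplicative, and a tracial functional of the
trace of `(u i * x * v j)` is its value at `x * ∑ k, v k * u k = x`. Matrix units enter only through
`u i = e 0 i` and `v j = e j 0`, for which `∑ k, v k * u k = ∑ k, e k k = 1`.
-/

section CompressedMatrix

variable {ι κ m n R M F : Type*}

/-- The matrix with entries `u i * x * v j`, that is, the product of the column `u`, the scalar `x`
and the row `v`. For matrix units `e`, the matrix `x̃` is the case `u i = e 0 i`, `v j = e j 0`. -/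
def compressedMatrix [Mul R] (u : m → R) (v : n → R) (x : R) : Matrix m n R :=
  Matrix.of fun i j => u i * x * v j

theorem compressedMatrix_apply [Mul R] (u : m → R) (v : n → R) (x : R) (i : m) (j : n) :
    compressedMatrix u v x i j = u i * x * v j :=
  rfl

theorem compressedMatrix_mul_compressedMatrix [Fintype κ] [NonUnitalSemiring R]
    (u : m → R) (v u' : κ → R) (v' : n → R) (x y : R) :
    compressedMatrix u v x * compressedMatrix u' v' y =
      compressedMatrix u v' (x * (∑ k, v k * u' k) * y) := by
  ext i j
  simp only [Matrix.mul_apply, compressedMatrix_apply, Finset.mul_sum, Finset.sum_mul, mul_assoc]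

theorem compressedMatrix_pow [Fintype ι] [DecidableEq ι] [Semiring R] {u v : ι → R}
    (huv : ∑ k, v k * u k = 1) (x : R) {p : ℕ} (hp : p ≠ 0) :
    compressedMatrix u v x ^ p = compressedMatrix u v (x ^ p) := by
  replace hp : 1 ≤ p := Nat.one_le_iff_ne_zero.mpr hp
  induction p, hp using Nat.le_induction with
  | base => simp only [pow_one]
  | succ p _ ih =>
    rw [pow_succ, ih, compressedMatrix_mul_compressedMatrix, huv, mul_one, pow_succ]

theorem map_trace_compressedMatrix [Fintype ι] [NonUnitalSemiring R] [AddCommMonoid M]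
    [FunLike F R M] [AddMonoidHomClass F R M] (φ : F) (hφ : ∀ a b, φ (a * b) = φ (b * a))
    (u v : ι → R) (x : R) :
    φ (compressedMatrix u v x).trace = φ (x * ∑ k, v k * u k) :=
  calc
    φ (compressedMatrix u v x).trace = ∑ i, φ (u i * (x * v i)) := by
      simp only [Matrix.trace, Matrix.diag_apply, compressedMatrix_apply, map_sum, mul_assoc]
    _ = ∑ i, φ (x * v i * u i) := Finset.sum_congr rfl fun i _ => hφ (u i) (x * v i)
    _ = φ (x * ∑ k, v k * u k) := by simp only [Finset.mul_sum, map_sum, mul_assoc]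

theorem trace_compressed_matrix_moments_general [Fintype ι] [DecidableEq ι] [Semiring R]
    [AddCommMonoid M] [FunLike F R M] [AddMonoidHomClass F R M] (φ : F)
    (hφ : ∀ a b, φ (a * b) = φ (b * a)) {u v : ι → R} (huv : ∑ k, v k * u k = 1)
    (x : R) {p : ℕ} (hp : p ≠ 0) :
    φ (compressedMatrix u v x ^ p).trace = φ (x ^ p) := by
  rw [compressedMatrix_pow huv x hp, map_trace_compressedMatrix φ hφ, huv, mul_one]

end CompressedMatrix

/-- Let `φ` be a tracial linear functional on a unital ℂ-algebra `A`, and let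
`(e i j)` be a family of matrix units in `A` summing to `1`. For `x ∈ A`, the matrix
`x̃ ∈ M_n(A)` with entries `x̃ i j = e 0 i * x * e j 0` satisfies
`Σ_i φ((x̃ ^ p) i i) = φ (x ^ p)` for every `p ≥ 1`. -/
theorem trace_compressed_matrix_moments
    (n : ℕ) [NeZero n] {A : Type*} [Ring A] [Algebra ℂ A]
    (φ : A →ₗ[ℂ] ℂ) (htr : ∀ a b : A, φ (a * b) = φ (b * a))
    (e : Fin n → Fin n → A)
    (hmul : ∀ i j k l : Fin n, e i j * e k l = if j = k then e i l else 0)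
    (hsum : ∑ i, e i i = 1)
    (x : A) (p : ℕ) (hp : 1 ≤ p) :
    ∑ i, φ (((Matrix.of fun i j : Fin n => e 0 i * x * e j 0) ^ p) i i) = φ (x ^ p) := by
  have huv : ∑ k, e k 0 * e 0 k = 1 := by simpa only [hmul, ↓reduceIte] using hsum
  exact (map_sum φ _ _).symm.trans
    (trace_compressed_matrix_moments_general φ htr huv x (Nat.one_le_iff_ne_zero.mp hp))
end
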